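/- For every k ≥ 2 there exists D = D(k) > 0 such that the following holds for all n. Let F be the finite field with 2^m elements where 2n ≤ 2^m ≤ 4n, let τ : [n] ↪ F* be injective, let C > 0, and let L ∈ H_{k−1}(n) be such that τ(L) is C-affine-bounded. Then for every s ∈ F^k: Σ_{F ∈ FO_2} |ker F_2| · |(F_1 s + im F_2) ∩ τ(L)| ≤ D·C·|F|·|L|. -/

import Mathlib

open Finset

section LinOps

variable (F : Type*) [Field F] (k : ℕ)

/-- Inclusion of the first block: `x ↦ (x, 0)`. -/
def inlMap : (Fin k → F) →ₗ[F] ((Fin k ⊕ Fin k) → F) where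
  toFun x := Sum.elim x 0
  map_add' x y := by funext s; cases s <;> simp
  map_smul' c x := by funext s; cases s <;> simp

/-- Inclusion of the second block: `a ↦ (0, a)`. -/
def inrMap : (Fin k → F) →ₗ[F] ((Fin k ⊕ Fin k) → F) where
  toFun a := Sum.elim 0 a
  map_add' x y := by funext s; cases s <;> simp
  map_smul' c x := by funext s; cases s <;> simp

variable {F k}

/-- For `T : F^{2k} → M`, the map `T₁ : F^k → M`, `x ↦ T(x,0)`. -/
def leftPart {M : Type*} [AddCommMonoid M] [Module F M]
    (T : ((Fin k ⊕ Fin k) → F) →ₗ[F] M) : (Fin k → F) →ₗ[F] M :=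
  T ∘ₗ inlMap F k

/-- For `T : F^{2k} → M`, the map `T₂ : F^k → M`, `a ↦ T(0,a)`. -/
def rightPart {M : Type*} [AddCommMonoid M] [Module F M]
    (T : ((Fin k ⊕ Fin k) → F) →ₗ[F] M) : (Fin k → F) →ₗ[F] M :=
  T ∘ₗ inrMap F k

variable (F k)

/-- The operator `C : F^k → F^{2k}` given by the block matrix `[I; J + I]`. -/
def Cop : (Fin k → F) →ₗ[F] ((Fin k ⊕ Fin k) → F) where
  toFun x := Sum.elim x fun i => x i + ∑ j, x j
  map_add' x y := by
    funext s; cases s <;> simp [Finset.sum_add_distrib] <;> ring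
  map_smul' c x := by
    funext s; cases s <;> simp [Finset.mul_sum, mul_add]

variable {k}

/-- The operator `E_I : F^{2k} → F^k` given by the block matrix `[X_{[k]\I} X_I]`. -/
def Eop (I : Finset (Fin k)) : ((Fin k ⊕ Fin k) → F) →ₗ[F] (Fin k → F) where
  toFun y i := if i ∈ I then y (Sum.inr i) else y (Sum.inl i)
  map_add' x y := by funext i; by_cases h : i ∈ I <;> simp [h]
  map_smul' c x := by funext i; by_cases h : i ∈ I <;> simp [h]

variable {F}

/-- The map `Fin (k-1) → Fin k` skipping `i`. -/
def delIdx {k : ℕ} (i : Fin k) (j : Fin (k - 1)) : Fin k :=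
  if (j : ℕ) < (i : ℕ) then ⟨j, by have := j.isLt; omega⟩
  else ⟨(j : ℕ) + 1, by have := j.isLt; omega⟩

variable (F)

/-- The projection `P_i : F^k → F^{k-1}` deleting the `i`-th coordinate. -/
def Pop (i : Fin k) : (Fin k → F) →ₗ[F] (Fin (k - 1) → F) :=
  LinearMap.funLeft F F (delIdx i)

variable (k)

/-- The vertex operators `VO = VO₁ ∪ VO₂`. -/
def VO : Set (((Fin k ⊕ Fin k) → F) →ₗ[F] F) :=
  {V | (∃ i : Fin k, V = LinearMap.proj i ∘ₗ Eop F (∅ : Finset (Fin k)) ∨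
          V = LinearMap.proj i ∘ₗ Eop F (Finset.univ : Finset (Fin k))) ∨
       (∃ (i : Fin k) (I : Finset (Fin k)), I.Nonempty ∧ Even I.card ∧
          V = LinearMap.proj i ∘ₗ Eop F (Finset.univ : Finset (Fin k)) ∘ₗ Cop F k ∘ₗ Eop F I)}

/-- The facet operators `FO₁ = {P_i E_∅}`. -/
def FO1 : Set (((Fin k ⊕ Fin k) → F) →ₗ[F] (Fin (k - 1) → F)) :=
  {T | ∃ i : Fin k, T = Pop F i ∘ₗ Eop F (∅ : Finset (Fin k))}

/-- The facet operators `FO₂ = {P_i E_J C E_I : |J| even, I ≠ ∅, |I| even}`. -/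
def FO2 : Set (((Fin k ⊕ Fin k) → F) →ₗ[F] (Fin (k - 1) → F)) :=
  {T | ∃ (i : Fin k) (J I : Finset (Fin k)), Even J.card ∧ I.Nonempty ∧ Even I.card ∧
        T = Pop F i ∘ₗ Eop F J ∘ₗ Cop F k ∘ₗ Eop F I}

/-- The facet operators `FO = FO₁ ∪ FO₂`. -/
def FO : Set (((Fin k ⊕ Fin k) → F) →ₗ[F] (Fin (k - 1) → F)) :=
  FO1 F k ∪ FO2 F k

/-- The edge operators `EO = EO₁ ∪ EO₂`. -/
def EO : Set (((Fin k ⊕ Fin k) → F) →ₗ[F] (Fin k → F)) :=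
  {T | (∃ I : Finset (Fin k), Odd I.card ∧ T = Eop F I) ∨
       (∃ J I : Finset (Fin k), J.Nonempty ∧ I.Nonempty ∧ Even I.card ∧
          T = Eop F J ∘ₗ Cop F k ∘ₗ Eop F I)}

end LinOps

/-- A set `S ⊆ F^ι` is `C`-affine-bounded if for every affine subspace `A` of
dimension at least 1, `|A ∩ S| ≤ C·|A|·|S|/|F|^{|ι|}`. -/
def AffineBounded (F : Type*) [Field F] [Fintype F] {ι : Type*} [Fintype ι]
    (C : ℝ) (S : Set (ι → F)) : Prop :=
  ∀ A : AffineSubspace F (ι → F), (A : Set (ι → F)).Nonempty →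
    1 ≤ Module.finrank F A.direction →
    (Set.ncard ((A : Set (ι → F)) ∩ S) : ℝ) ≤
      C * (Nat.card (A : Set (ι → F))) * (Set.ncard S) / (Fintype.card F : ℝ) ^ (Fintype.card ι)

open Finset

open Classical in
/-- The facet operators `FO₂` as a finite set. -/
noncomputable def FO2fin (F : Type*) [Field F] (k : ℕ) :
    Finset (((Fin k ⊕ Fin k) → F) →ₗ[F] (Fin (k - 1) → F)) :=
  ((Finset.univ : Finset (Fin k × Finset (Fin k) × Finset (Fin k))).filter
      fun t => Even t.2.1.card ∧ t.2.2.Nonempty ∧ Even t.2.2.card).image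
    fun t => Pop F t.1 ∘ₗ Eop F t.2.1 ∘ₗ Cop F k ∘ₗ Eop F t.2.2

/-- Every index other than `i` is hit by `delIdx i`. -/
lemma exists_delIdx_eq {k : ℕ} {i p : Fin k} (h : p ≠ i) : ∃ j, delIdx i j = p := by
  have hp := p.isLt
  have hi := i.isLt
  have hne : (p : ℕ) ≠ i := fun e => h (Fin.ext e)
  rcases lt_or_gt_of_ne hne with hlt | hgt
  · exact ⟨⟨p, by omega⟩, by simp [delIdx, hlt]⟩
  · refine ⟨⟨p - 1, by omega⟩, ?_⟩
    have : ¬ ((p : ℕ) - 1 < i) := by omega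
    apply Fin.ext
    simp only [delIdx, this, if_false]
    omega

/-- If `I` has at least two elements then the second part of `P_i E_J C E_I` is nonzero:
`C` maps `e_p - e_q` to `(e_p - e_q, e_p - e_q)`, which survives the deletion of one coordinate. -/
lemma rightPart_facetOp_ne_zero {F : Type*} [Field F] {k : ℕ} (i : Fin k) (J : Finset (Fin k))
    {I : Finset (Fin k)} (hI : 1 < I.card) :
    rightPart (Pop F i ∘ₗ Eop F J ∘ₗ Cop F k ∘ₗ Eop F I) ≠ 0 := by
  obtain ⟨a, ha, b, hb, hab⟩ := Finset.one_lt_card.mp hI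
  obtain ⟨p, hp, q, hq, hpq, hpi⟩ : ∃ p ∈ I, ∃ q ∈ I, p ≠ q ∧ p ≠ i := by
    by_cases h : a = i
    · exact ⟨b, hb, a, ha, hab.symm, fun e => hab (h.trans e.symm)⟩
    · exact ⟨a, ha, b, hb, hab, h⟩
  obtain ⟨j, hj⟩ := exists_delIdx_eq hpi
  intro h0
  set x : Fin k → F := Pi.single p 1 - Pi.single q 1 with hx
  have hE : Eop F I (inrMap F k x) = x := by
    funext r
    by_cases hr : r ∈ I
    · simp [Eop, inrMap, hr]
    · have hrp : r ≠ p := fun e => hr (e ▸ hp)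
      have hrq : r ≠ q := fun e => hr (e ▸ hq)
      simp [Eop, inrMap, hr, hx, hrp, hrq]
  have h1 := congrFun (LinearMap.congr_fun h0 x) j
  simp only [rightPart, LinearMap.comp_apply, hE] at h1
  simp [Pop, LinearMap.funLeft_apply, hj, Eop, Cop, hx, hpq] at h1

/-- Rank-nullity for linear maps, in terms of cardinalities. -/
lemma card_ker_mul_card_range {R M N : Type*} [Ring R] [AddCommGroup M] [Module R M]
    [AddCommGroup N] [Module R N] (f : M →ₗ[R] N) :
    Nat.card (LinearMap.ker f) * Nat.card (LinearMap.range f) = Nat.card M := by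
  rw [Submodule.card_eq_card_quotient_mul_card (LinearMap.ker f),
    Nat.card_congr f.quotKerEquivRange.toEquiv]

/-- A coset of the range of a nonzero linear map, weighted by the size of the kernel, meets an
affine-bounded set in the expected proportion up to the constant `C`. -/
lemma AffineBounded.card_ker_mul_ncard_le {F : Type*} [Field F] [Fintype F] {ι κ : Type*}
    [Fintype ι] [Fintype κ] {C : ℝ} {S : Set (ι → F)} (hS : AffineBounded F C S)
    {f : (κ → F) →ₗ[F] (ι → F)} (hf : f ≠ 0) (v : ι → F) :
    (Nat.card (LinearMap.ker f) : ℝ) *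
        (Set.ncard ((fun y => v + y) '' (LinearMap.range f : Set (ι → F)) ∩ S) : ℝ) ≤
      C * (Fintype.card F : ℝ) ^ Fintype.card κ * S.ncard /
        (Fintype.card F : ℝ) ^ Fintype.card ι := by
  set A := AffineSubspace.mk' v (LinearMap.range f) with hA
  have hcoe : (A : Set (ι → F)) = (fun y => v + y) '' (LinearMap.range f : Set (ι → F)) := by
    ext z
    simp only [hA, SetLike.mem_coe, AffineSubspace.mem_mk', vsub_eq_sub, Set.mem_image]
    exact ⟨fun h => ⟨_, h, by simp⟩, by rintro ⟨y, hy, rfl⟩; simpa using hy⟩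
  have hcard : Nat.card (A : Set (ι → F)) = Nat.card (LinearMap.range f) := by
    rw [hcoe, Nat.card_image_of_injective (add_right_injective v)]
    rfl
  have hdim : 1 ≤ Module.finrank F A.direction := by
    rw [hA, AffineSubspace.direction_mk', Submodule.one_le_finrank_iff]
    exact fun h => hf (LinearMap.range_eq_bot.mp h)
  have hbound := hS A (AffineSubspace.mk'_nonempty v _) hdim
  rw [hcard, hcoe] at hbound
  have hprod : (Nat.card (LinearMap.ker f) : ℝ) * Nat.card (LinearMap.range f) =
      (Fintype.card F : ℝ) ^ Fintype.card κ := by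
    rw [← Nat.cast_mul, card_ker_mul_card_range, Nat.card_fun, Nat.card_eq_fintype_card,
      Nat.card_eq_fintype_card, Nat.cast_pow]
  refine (mul_le_mul_of_nonneg_left hbound (Nat.cast_nonneg _)).trans_eq ?_
  rw [← hprod]
  ring

/-- The number of facet operators in `FO₂` is bounded in terms of `k` only. -/
lemma card_FO2fin_le (F : Type*) [Field F] (k : ℕ) :
    (FO2fin F k).card ≤ k * (2 ^ k * 2 ^ k) := by
  classical
  refine (Finset.card_image_le.trans (Finset.card_filter_le _ _)).trans_eq ?_
  simp

/-- if `τ(L)` is `C`-affine-bounded then for every `s ∈ F^k`,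
`Σ_{T ∈ FO₂} |ker T₂|·|(T₁ s + im T₂) ∩ τ(L)| ≤ D·C·|F|·|L|`. -/
theorem stmt_9 (k : ℕ) (hk : 2 ≤ k) :
    ∃ D : ℝ, 0 < D ∧
      ∀ (n m : ℕ) (F : Type) [Field F] [Fintype F],
        ringChar F = 2 → Fintype.card F = 2 ^ m → 2 * n ≤ 2 ^ m → 2 ^ m ≤ 4 * n →
        ∀ τ : Fin n → F, Function.Injective τ → (∀ v, τ v ≠ 0) →
          ∀ C : ℝ, 0 < C →
            ∀ L : Finset (Finset (Fin n)), (∀ f ∈ L, f.card = k - 1) →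
              ∀ ordL : Finset (Fin n) → Fin (k - 1) → Fin n,
                (∀ f : Finset (Fin n), f.card = k - 1 →
                    Finset.image (ordL f) Finset.univ = f) →
              AffineBounded F C ((fun f => τ ∘ ordL f) '' (L : Set (Finset (Fin n)))) →
              ∀ s : Fin k → F,
                ∑ T ∈ FO2fin F k,
                    (Nat.card (LinearMap.ker (rightPart T)) : ℝ) *
                      (Set.ncard
                        ((fun y => leftPart T s + y) ''
                            (LinearMap.range (rightPart T) : Set (Fin (k - 1) → F)) ∩
                          (fun f => τ ∘ ordL f) '' (L : Set (Finset (Fin n)))) : ℝ) ≤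
                  D * C * (Fintype.card F : ℝ) * (L.card : ℝ) := by
  refine ⟨(k * (2 ^ k * 2 ^ k) : ℕ), by positivity, ?_⟩
  intro n m F _ _ _ _ _ _ τ _ _ C hC L _ ordL _ hS s
  have hterm : ∀ T ∈ FO2fin F k,
      (Nat.card (LinearMap.ker (rightPart T)) : ℝ) *
        (Set.ncard ((fun y => leftPart T s + y) ''
            (LinearMap.range (rightPart T) : Set (Fin (k - 1) → F)) ∩
          (fun f => τ ∘ ordL f) '' (L : Set (Finset (Fin n)))) : ℝ) ≤
        C * Fintype.card F * L.card := by
    intro T hT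
    classical
    simp only [FO2fin, Finset.mem_image, Finset.mem_filter, Finset.mem_univ, true_and] at hT
    obtain ⟨⟨i, J, I⟩, ⟨-, hIne, hIeven⟩, rfl⟩ := hT
    have hI : 1 < I.card := by
      have hpos : 0 < I.card := hIne.card_pos
      obtain ⟨r, hr : I.card = r + r⟩ := hIeven
      omega
    refine (hS.card_ker_mul_ncard_le (rightPart_facetOp_ne_zero i J hI) _).trans ?_
    have hq : (0 : ℝ) < Fintype.card F := by exact_mod_cast Fintype.card_pos
    have hpow : (Fintype.card F : ℝ) ^ k = Fintype.card F * (Fintype.card F : ℝ) ^ (k - 1) := by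
      rw [← pow_succ', Nat.sub_add_cancel (by omega)]
    have hncard : (((fun f => τ ∘ ordL f) '' (L : Set (Finset (Fin n)))).ncard : ℝ) ≤ L.card := by
      have := Set.ncard_image_le (f := fun f => τ ∘ ordL f) L.finite_toSet
      rw [Set.ncard_coe_finset] at this
      exact_mod_cast this
    rw [Fintype.card_fin, Fintype.card_fin, hpow, div_le_iff₀ (by positivity)]
    calc _ ≤ C * (Fintype.card F * (Fintype.card F : ℝ) ^ (k - 1)) * L.card := by gcongr
      _ = _ := by ring
  refine (Finset.sum_le_card_nsmul _ _ _ hterm).trans ?_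
  rw [nsmul_eq_mul, mul_assoc _ C, mul_assoc _ (C * _)]
  gcongr
  exact card_FO2fin_le F k
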